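/- Let p be a prime, let G be a nontrivial finite p-group, and let k be a field of characteristic p. Then the group cohomology of G with trivial coefficients k is unbounded: there are infinitely many s ≥ 0 with H^s(G; k) ≠ 0. (Equivalently, the trivial module k is not a perfect complex of kG-modules, so it defines a nonzero object of the stable module category.) -/

import Mathlib

/-!
Suppose `H^s(G; k) = 0`. Since `G` is a `p`-group and `k` has characteristic `p`, every nonzero
representation contains a copy of the trivial representation `k`, so the long exact sequence and
induction on the dimension give `H^s(G; M) = 0` for every finite-dimensional `M`. Applied to
`M = Coind_S^G k`, Shapiro's lemma yields `H^s(S; k) = 0` for every subgroup `S`. But if `S` is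
generated by an element `g ≠ 1`, then `p` divides `|S|`, so both the norm and `g - 1` vanish on `k`:
the periodic complex computing `H^*(S; k)` has zero differentials, and `H^s(S; k) = k ≠ 0`.
-/

open CategoryTheory Limits

universe u

theorem exists_ne_zero_mem_fixedPoints_of_isPGroup {p : ℕ} [Fact p.Prime] {G V : Type*} [Group G]
    [Finite G] (hG : IsPGroup p G) [AddCommGroup V] [DistribMulAction G V] {v : V} (hv : v ≠ 0)
    (hpv : p • v = 0) : ∃ w ∈ MulAction.fixedPoints G V, w ≠ 0 := by
  -- `V` may be infinite: fixed points are counted modulo `p` in the finite group spanned by `G v`.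
  let F : AddSubgroup V := AddSubgroup.closure (MulAction.orbit G v)
  have hvF : v ∈ F := AddSubgroup.subset_closure (MulAction.mem_orbit_self v)
  have smul_mem_F (g : G) : F ≤ F.comap (DistribSMul.toAddMonoidHom V g) := by
    rw [AddSubgroup.closure_le]
    rintro _ ⟨h, rfl⟩
    exact AddSubgroup.subset_closure ⟨g * h, mul_smul g h v⟩
  have nsmul_F : F ≤ (nsmulAddMonoidHom p).ker := by
    rw [AddSubgroup.closure_le]
    rintro _ ⟨h, rfl⟩
    simp [smul_comm p h v, hpv]
  have : Finite (MulAction.orbit G v) := Set.finite_range _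
  have : AddGroup.FG F := AddGroup.closure_finite_fg _
  have : Finite F := AddCommGroup.finite_of_fg_isAddTorsion F fun x =>
    isOfFinAddOrder_iff_nsmul_eq_zero.2
      ⟨p, (Fact.out : p.Prime).pos, Subtype.ext (nsmul_F x.2)⟩
  have hpF : p ∣ Nat.card F := by
    have order_v : addOrderOf (⟨v, hvF⟩ : F) = p :=
      addOrderOf_eq_prime (Subtype.ext hpv) fun h => hv (congrArg Subtype.val h)
    exact order_v ▸ addOrderOf_dvd_natCard _
  let X : SubMulAction G V := ⟨F, fun g _ hx => smul_mem_F g hx⟩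
  have : Finite X := ‹Finite F›
  obtain ⟨w, hw, hw0⟩ := hG.exists_fixed_point_of_prime_dvd_card_of_fixed_point X hpF
    (a := ⟨0, F.zero_mem⟩) fun g => Subtype.ext (smul_zero g)
  exact ⟨w, fun g => congrArg Subtype.val (hw g), fun h => hw0 (Subtype.ext h.symm)⟩

theorem exists_ne_zero_mem_invariants_of_isPGroup {p : ℕ} [Fact p.Prime] {G : Type*} [Group G]
    [Finite G] (hG : IsPGroup p G) {k V : Type*} [CommRing k] [CharP k p] [AddCommGroup V]
    [Module k V] [Nontrivial V] (ρ : Representation k G V) : ∃ w ∈ ρ.invariants, w ≠ 0 := by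
  obtain ⟨v, hv⟩ := exists_ne (0 : V)
  let : DistribMulAction G V := DistribMulAction.compHom V ρ
  exact exists_ne_zero_mem_fixedPoints_of_isPGroup hG hv
    (by rw [← Nat.cast_smul_eq_nsmul k, CharP.cast_eq_zero, zero_smul])

section Devissage

variable {k G : Type u} [CommRing k] [Group G]

theorem isZero_groupCohomology_of_shortExact {X : ShortComplex (Rep.{u} k G)} (hX : X.ShortExact)
    {s : ℕ} (h₁ : IsZero (groupCohomology X.X₁ s)) (h₃ : IsZero (groupCohomology X.X₃ s)) :
    IsZero (groupCohomology X.X₂ s) :=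
  (groupCohomology.mapShortComplex₂_exact hX s).isZero_of_both_zeros
    (h₁.eq_of_src _ _) (h₃.eq_of_tgt _ _)

/-- The sequence `W ⟶ M ⟶ M ⧸ W` of representations attached to a subrepresentation `W` of `M`. -/
def quotientShortComplex (M : Rep.{u} k G) (W : Submodule k M) (hW : ∀ g, W ≤ W.comap (M.ρ g)) :
    ShortComplex (Rep.{u} k G) where
  X₁ := M.subrepresentation W hW
  X₂ := M
  X₃ := M.quotient W hW
  f := M.subtype W hW
  g := M.mkQ W hW
  zero := by ext x; exact (Submodule.Quotient.mk_eq_zero W).2 x.2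

theorem quotientShortComplex_shortExact (M : Rep.{u} k G) (W : Submodule k M)
    (hW : ∀ g, W ≤ W.comap (M.ρ g)) : (quotientShortComplex M W hW).ShortExact where
  exact := (forget₂ (Rep.{u} k G) (ModuleCat k)).reflects_exact_of_faithful _ <|
    (ShortComplex.moduleCat_exact_iff _).2 fun x hx =>
      ⟨(⟨x, (Submodule.Quotient.mk_eq_zero W).1 hx⟩ : W), rfl⟩
  mono_f := (Rep.mono_iff_injective _).2 Subtype.val_injective
  epi_g := (Rep.epi_iff_surjective _).2 W.mkQ_surjective

end Devissage

section PGroup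

variable {k G : Type u} [Field k] [Group G]

/-- A nonzero invariant vector `w` spans a copy of the trivial representation, `c ↦ c • w`. -/
noncomputable def trivialIsoSpanSingleton (M : Rep.{u} k G) {w : M} (hw : w ∈ M.ρ.invariants)
    (hw0 : w ≠ 0) (hW : ∀ g, (k ∙ w) ≤ (k ∙ w).comap (M.ρ g)) :
    Rep.trivial k G k ≅ M.subrepresentation (k ∙ w) hW :=
  Rep.mkIso <| .mk (LinearEquiv.toSpanNonzeroSingleton k M w hw0) fun g => by
    ext
    simp [hw g]

variable [Finite G] {p : ℕ} [Fact p.Prime] [CharP k p]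

theorem isZero_groupCohomology_of_isZero_trivial (hG : IsPGroup p G) {s : ℕ}
    (hs : IsZero (groupCohomology (Rep.trivial k G k) s)) (M : Rep.{u} k G) [Module.Finite k M] :
    IsZero (groupCohomology M s) := by
  induction hn : Module.finrank k M using Nat.strong_induction_on generalizing M with | _ n ih
  cases subsingleton_or_nontrivial M with
  | inl hM => exact (groupCohomology.functor k G s).map_isZero ((Rep.isZero_iff k G M).2 hM)
  | inr hM =>
    obtain ⟨w, hw, hw0⟩ := exists_ne_zero_mem_invariants_of_isPGroup hG M.ρ
    have hW (g : G) : (k ∙ w) ≤ (k ∙ w).comap (M.ρ g) := by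
      rw [Submodule.span_singleton_le_iff_mem, Submodule.mem_comap, hw g]
      exact Submodule.mem_span_singleton_self w
    have h_span : IsZero (groupCohomology (M.subrepresentation (k ∙ w) hW) s) :=
      hs.of_iso ((groupCohomology.functor k G s).mapIso (trivialIsoSpanSingleton M hw hw0 hW).symm)
    have finrank_lt : Module.finrank k (M ⧸ (k ∙ w)) < n := by
      have := (k ∙ w).finrank_quotient_add_finrank
      rw [finrank_span_singleton hw0] at this
      lia
    have : Module.Finite k (M.quotient (k ∙ w) hW) :=
      inferInstanceAs (Module.Finite k (M ⧸ (k ∙ w)))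
    exact isZero_groupCohomology_of_shortExact (quotientShortComplex_shortExact M _ hW)
      h_span (ih _ finrank_lt (M.quotient _ hW) rfl)

theorem isZero_groupCohomology_subgroup_of_isZero_trivial (hG : IsPGroup p G) {s : ℕ}
    (hs : IsZero (groupCohomology (Rep.trivial k G k) s)) (S : Subgroup G) (A : Rep.{u} k S)
    [Module.Finite k A] : IsZero (groupCohomology A s) := by
  have : Module.Finite k (Rep.coind S.subtype A) :=
    inferInstanceAs (Module.Finite k (Representation.coindV S.subtype A.ρ))
  exact (isZero_groupCohomology_of_isZero_trivial hG hs (Rep.coind S.subtype A)).of_iso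
    (groupCohomology.coindIso A s).symm

end PGroup

section Cyclic

variable {k C V : Type u} [CommRing k] [AddCommGroup V] [Module k V]

theorem norm_trivial_eq_zero [Group C] [Fintype C] (hV : ∀ v : V, Nat.card C • v = 0) :
    (Rep.trivial k C V).norm = 0 := by
  refine Rep.hom_ext ?_
  ext v
  refine (Rep.norm_apply (Rep.trivial k C V)).trans ?_
  simp [Representation.norm, ← Nat.card_eq_fintype_card, hV]

theorem applyAsHom_trivial [CommGroup C] (g : C) :
    (Rep.trivial k C V).applyAsHom g = 𝟙 _ := by
  ext v
  exact Rep.applyAsHom_apply g v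

theorem nonempty_groupCohomology_trivial_iso_of_isCyclic [Group C] [IsCyclic C] [Finite C]
    (hV : ∀ v : V, Nat.card C • v = 0) (s : ℕ) :
    Nonempty (groupCohomology (Rep.trivial k C V) s ≅ ModuleCat.of k V) := by
  let : CommGroup C := IsCyclic.commGroup
  let := Fintype.ofFinite C
  obtain ⟨g, hg⟩ := IsCyclic.exists_generator (α := C)
  have norm_zero : ModuleCat.ofHom (Rep.trivial k C V).norm.hom.toLinearMap = 0 := by
    rw [norm_trivial_eq_zero hV]; rfl
  have sub_zero :
      ModuleCat.ofHom ((Rep.trivial k C V).applyAsHom g - 𝟙 _).hom.toLinearMap = 0 := by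
    rw [applyAsHom_trivial, sub_self]; rfl
  rcases eq_or_ne s 0 with rfl | hs
  · exact ⟨groupCohomology.H0IsoOfIsTrivial (Rep.trivial k C V)⟩
  have : NeZero s := ⟨hs⟩
  rcases s.even_or_odd with hs | hs
  · exact ⟨Rep.FiniteCyclicGroup.groupCohomologyIsoEven _ g hg s hs ≪≫
      (ShortComplex.LeftHomologyData.ofZeros _ norm_zero sub_zero).homologyIso⟩
  · exact ⟨Rep.FiniteCyclicGroup.groupCohomologyIsoOdd _ g hg s hs ≪≫
      (ShortComplex.LeftHomologyData.ofZeros _ sub_zero norm_zero).homologyIso⟩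

end Cyclic

theorem groupCohomology_p_group_unbounded_general {p : ℕ} [Fact p.Prime] {G : Type u} [Group G]
    [Finite G] [Nontrivial G] (hG : IsPGroup p G) (k : Type u) [Field k] [CharP k p] (s : ℕ) :
    Nontrivial (groupCohomology (Rep.trivial k G k) s) := by
  by_contra h
  have h_triv : IsZero (groupCohomology (Rep.trivial k G k) s) :=
    ModuleCat.isZero_iff_subsingleton.2 (not_nontrivial_iff_subsingleton.1 h)
  obtain ⟨g, hg⟩ := exists_ne (1 : G)
  let C := Subgroup.zpowers g
  have card_smul (c : k) : Nat.card C • c = 0 := by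
    rw [nsmul_eq_mul, (CharP.cast_eq_zero_iff k p _).2 (Nat.card_zpowers g ▸ hG.dvd_orderOf hg),
      zero_mul]
  obtain ⟨e⟩ := nonempty_groupCohomology_trivial_iso_of_isCyclic (k := k) card_smul s
  have k_zero : IsZero (ModuleCat.of k k) :=
    (isZero_groupCohomology_subgroup_of_isZero_trivial hG h_triv C _).of_iso e.symm
  exact not_subsingleton k (ModuleCat.isZero_of_iff_subsingleton.1 k_zero)

/-- For `p` prime, `G` a nontrivial finite `p`-group, and `k` a field of characteristic `p`,
the group cohomology of `G` with trivial coefficients `k` is unbounded: there are infinitely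
many `s` with `H^s(G; k) ≠ 0`. -/
theorem groupCohomology_p_group_unbounded
    (p : ℕ) [Fact p.Prime] (G : Type) [Group G] [Finite G] [Nontrivial G]
    (hG : IsPGroup p G) (k : Type) [Field k] [CharP k p] :
    {s : ℕ | Nontrivial (groupCohomology (Rep.trivial k G k) s)}.Infinite :=
  Set.infinite_univ.mono fun s _ => groupCohomology_p_group_unbounded_general hG k s
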